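/- The R-matrix R satisfies the Hecke quadratic relation (R − q^{−1}·Id_{V⊗V}) ∘ (R + q·Id_{V⊗V}) = 0, i.e. R² = (q^{−1} − q)·R + Id_{V⊗V}. -/

import Mathlib

set_option synthInstance.maxHeartbeats 400000
set_option maxHeartbeats 800000

noncomputable section

/-- The base field `K = ℚ(q)`. -/
abbrev K : Type := RatFunc ℚ

/-- The variable `q`. -/
def q : K := RatFunc.X

/-- The super sign `(-1)^{|i||j|}`, where the parity `|i|` of an index
`i : Fin (m+n)` (0-based) is `0` if `i < m` and `1` otherwise. -/
def sgn (m : ℕ) {M : ℕ} (i j : Fin M) : K :=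
  if m ≤ (i : ℕ) ∧ m ≤ (j : ℕ) then -1 else 1

/-- The matrix (in the standard basis of `V ⊗ V`, `V = K^{m+n}`, indices 0-based)
of the `U_q(gl(m|n))` R-matrix: `R(eᵢ ⊗ eᵢ) = q⁻¹ eᵢ ⊗ eᵢ` for `i` of parity 0,
`R(eᵢ ⊗ eᵢ) = -q eᵢ ⊗ eᵢ` for `i` of parity 1,
`R(eᵢ ⊗ eⱼ) = (-1)^{|i||j|} eⱼ ⊗ eᵢ` for `i < j`, and
`R(eᵢ ⊗ eⱼ) = (-1)^{|i||j|} eⱼ ⊗ eᵢ + (q⁻¹ - q) eᵢ ⊗ eⱼ` for `i > j`.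
Entry `(p, r)` is the coefficient of `e_{p.1} ⊗ e_{p.2}` in `R(e_{r.1} ⊗ e_{r.2})`. -/
def Rmat (m n : ℕ) :
    Matrix (Fin (m + n) × Fin (m + n)) (Fin (m + n) × Fin (m + n)) K :=
  fun p r =>
    if r.1 = r.2 then
      (if p = r then (if (r.1 : ℕ) < m then q⁻¹ else -q) else 0)
    else
      (if p.1 = r.2 ∧ p.2 = r.1 then sgn m r.1 r.2 else 0)
        + (if r.2 < r.1 ∧ p = r then q⁻¹ - q else 0)

/-- The identity matrix on `V ⊗ V`. -/
def idVV (m n : ℕ) :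
    Matrix (Fin (m + n) × Fin (m + n)) (Fin (m + n) × Fin (m + n)) K := 1

/-!
`R` sends each `eᵢ ⊗ eⱼ` into the span of `eᵢ ⊗ eⱼ` and `eⱼ ⊗ eᵢ`, so the relation only has to be
checked on these invariant lines and planes. On a line `R` is one of the roots `q⁻¹`, `-q` of
`x² = (q⁻¹ - q) x + 1`; on a plane it has trace `q⁻¹ - q` and determinant `-1`, and the relation is
Cayley-Hamilton.
-/

section InvolutiveIndex

open Matrix

variable {ι S : Type*} [Fintype ι] [DecidableEq ι] [CommSemiring S]

theorem mul_self_eq_smul_add_one_of_mulVec_single {A : Matrix ι ι S} {σ : ι → ι}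
    (hσ : Function.Involutive σ) {a b : ι → S} {c : S}
    (hA : ∀ r, A *ᵥ Pi.single r 1 = a r • Pi.single r 1 + b r • Pi.single (σ r) 1)
    (hdiag : ∀ r, a r * a r + b r * b (σ r) = c * a r + 1)
    (hswap : ∀ r, b r * (a r + a (σ r)) = c * b r) :
    A * A = c • A + 1 := by
  refine ext_of_mulVec_single fun r => ?_
  have hA_sq : (A * A) *ᵥ Pi.single r 1 =
      (a r * a r + b r * b (σ r)) • Pi.single r 1 +
        (b r * (a r + a (σ r))) • Pi.single (σ r) 1 := by
    rw [← mulVec_mulVec, hA, mulVec_add, mulVec_smul, mulVec_smul, hA, hA, hσ r]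
    module
  rw [hA_sq, hdiag, hswap, add_mulVec, smul_mulVec, one_mulVec, hA]
  module

end InvolutiveIndex

theorem sub_smul_one_mul_add_smul_one_eq_zero_iff {S A : Type*} [CommRing S] [Ring A] [Algebra S A]
    (x : A) (s t : S) :
    (x - s • 1) * (x + t • 1) = 0 ↔ x * x = (s - t) • x + (s * t) • 1 := by
  have expand : (x - s • 1) * (x + t • 1) = x * x - ((s - t) • x + (s * t) • 1) := by
    simp only [sub_mul, mul_add, smul_mul_assoc, mul_smul_comm, one_mul, mul_one]
    module
  rw [expand, sub_eq_zero]

theorem q_ne_zero : q ≠ 0 := RatFunc.X_ne_zero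

theorem sgn_mul_sgn_swap (m : ℕ) {M : ℕ} (i j : Fin M) : sgn m i j * sgn m j i = 1 := by
  unfold sgn
  split_ifs <;> first | tauto | simp

namespace Rmat

/-- The coefficient of `eᵢ ⊗ eⱼ` in `R(eᵢ ⊗ eⱼ)`, where `r = (i, j)`. -/
def diagCoeff (m : ℕ) {M : ℕ} (r : Fin M × Fin M) : K :=
  if r.1 = r.2 then (if (r.1 : ℕ) < m then q⁻¹ else -q) else if r.2 < r.1 then q⁻¹ - q else 0

/-- The coefficient of `eⱼ ⊗ eᵢ` in `R(eᵢ ⊗ eⱼ)`, where `r = (i, j)`. For `i = j` it is `0`, since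
`diagCoeff` already accounts for the only term. -/
def swapCoeff (m : ℕ) {M : ℕ} (r : Fin M × Fin M) : K :=
  if r.1 = r.2 then 0 else sgn m r.1 r.2

theorem mulVec_single (m n : ℕ) (r : Fin (m + n) × Fin (m + n)) :
    (Rmat m n).mulVec (Pi.single r 1) =
      diagCoeff m r • Pi.single r 1 + swapCoeff m r • Pi.single r.swap 1 := by
  ext p
  obtain ⟨i, j⟩ := r
  by_cases hij : i = j
  · by_cases hj : (j : ℕ) < m <;>
      simp [Rmat, diagCoeff, swapCoeff, Pi.single_apply, hij, hj, neg_ite]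
  · by_cases hji : j < i <;>
      simp [Rmat, diagCoeff, swapCoeff, Pi.single_apply, Prod.ext_iff, hij, hji, add_comm]

variable (m : ℕ) {M : ℕ} (r : Fin M × Fin M)

theorem diagCoeff_mul_self_add_swapCoeff_mul_swap :
    diagCoeff m r * diagCoeff m r + swapCoeff m r * swapCoeff m r.swap =
      (q⁻¹ - q) * diagCoeff m r + 1 := by
  obtain ⟨i, j⟩ := r
  have hq : q⁻¹ * q = 1 := inv_mul_cancel₀ q_ne_zero
  by_cases hij : i = j
  · by_cases hi : (i : ℕ) < m <;>
      simp only [diagCoeff, swapCoeff, ← hij, hi, if_true, if_false, Prod.swap] <;>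
      linear_combination hq
  · simp only [diagCoeff, swapCoeff, Prod.swap, hij, Ne.symm hij, if_false, sgn_mul_sgn_swap]
    split_ifs <;> ring

theorem diagCoeff_add_diagCoeff_swap (hr : r.1 ≠ r.2) :
    diagCoeff m r + diagCoeff m r.swap = q⁻¹ - q := by
  rcases hr.lt_or_gt with h | h <;> simp [diagCoeff, h, h.ne, h.ne', h.not_gt]

theorem swapCoeff_mul_diagCoeff_add_swap :
    swapCoeff m r * (diagCoeff m r + diagCoeff m r.swap) = (q⁻¹ - q) * swapCoeff m r := by
  by_cases hr : r.1 = r.2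
  · simp [swapCoeff, hr]
  · rw [diagCoeff_add_diagCoeff_swap m r hr, mul_comm]

theorem mul_self (m n : ℕ) : Rmat m n * Rmat m n = (q⁻¹ - q) • Rmat m n + 1 :=
  mul_self_eq_smul_add_one_of_mulVec_single Prod.swap_swap (mulVec_single m n)
    (diagCoeff_mul_self_add_swapCoeff_mul_swap m) (swapCoeff_mul_diagCoeff_add_swap m)

end Rmat

/-- The R-matrix satisfies the Hecke quadratic relation
`(R - q⁻¹·Id) ∘ (R + q·Id) = 0`, i.e. `R² = (q⁻¹ - q)·R + Id`. -/
theorem hecke_quadratic_relation (m n : ℕ) :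
    (Rmat m n - q⁻¹ • idVV m n) * (Rmat m n + q • idVV m n) = 0 ∧
    Rmat m n * Rmat m n = (q⁻¹ - q) • Rmat m n + idVV m n := by
  refine ⟨(sub_smul_one_mul_add_smul_one_eq_zero_iff _ _ _).2 ?_, Rmat.mul_self m n⟩
  rw [inv_mul_cancel₀ q_ne_zero, one_smul, Rmat.mul_self]
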